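/- arXiv:1404.3438 — 3 statements merged into one kernel-verified Lean document; each statement's English description precedes it below -/
import Mathlib

section
/- Let 0 < γ < 1, let c be a Bernoulli(γ) random variable (P(c = 1) = γ, P(c = 0) = 1 − γ), and let a be a real random variable independent of c with E[a] = λ, where 0 < λ < γ, and with E[e^{−θa}] < ∞ for every θ ∈ ℝ. Then the rate function Φ₁ = sup_{θ∈ℝ} { −log E[e^{θ(c − a)}] } satisfies Φ₁ ≤ λ log(λ/γ) + (1 − λ) log((1 − λ)/(1 − γ)); i.e., the decay rate is maximized, among injection distributions with mean λ, by the constant injection a ≡ λ. -/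
open Real MeasureTheory ProbabilityTheory

/-- A random variable with masses `γ` at `1` and `1 - γ` at `0` takes almost surely a value in
`{0, 1}`. -/
lemma ae_eq_one_or_eq_zero_of_measure {Ω : Type*} [MeasurableSpace Ω] {μ : Measure Ω}
    [IsProbabilityMeasure μ] {γ : ℝ} (hγ0 : 0 ≤ γ) (hγ1 : γ ≤ 1) {c : Ω → ℝ} (hc : Measurable c)
    (hc1 : μ {ω | c ω = 1} = ENNReal.ofReal γ)
    (hc0 : μ {ω | c ω = 0} = ENNReal.ofReal (1 - γ)) :
    ∀ᵐ ω ∂μ, c ω = 1 ∨ c ω = 0 := by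
  have h1 : MeasurableSet {ω | c ω = 1} := hc (measurableSet_singleton 1)
  have h0 : MeasurableSet {ω | c ω = 0} := hc (measurableSet_singleton 0)
  have hdisj : Disjoint {ω | c ω = 1} {ω | c ω = 0} := by
    rw [Set.disjoint_left]
    intro ω h h'
    simp only [Set.mem_ofPred_eq] at h h'
    linarith
  have hunion : μ ({ω | c ω = 1} ∪ {ω | c ω = 0}) = 1 := by
    rw [measure_union hdisj h0, hc1, hc0, ← ENNReal.ofReal_add hγ0 (by linarith)]
    simp
  exact (prob_compl_eq_zero_iff (h1.union h0)).2 hunion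

/-- The moment generating function of a Bernoulli random variable. -/
lemma integral_exp_mul_of_bernoulli {Ω : Type*} [MeasurableSpace Ω] {μ : Measure Ω}
    [IsProbabilityMeasure μ] {γ : ℝ} (hγ0 : 0 ≤ γ) (hγ1 : γ ≤ 1) {c : Ω → ℝ} (hc : Measurable c)
    (hc1 : μ {ω | c ω = 1} = ENNReal.ofReal γ)
    (hc0 : μ {ω | c ω = 0} = ENNReal.ofReal (1 - γ)) (θ : ℝ) :
    ∫ ω, exp (θ * c ω) ∂μ = γ * exp θ + (1 - γ) := by
  have h1 : MeasurableSet {ω | c ω = 1} := hc (measurableSet_singleton 1)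
  have hae : (fun ω => exp (θ * c ω)) =ᵐ[μ]
      fun ω => 1 + {ω | c ω = 1}.indicator (fun _ => exp θ - 1) ω := by
    filter_upwards [ae_eq_one_or_eq_zero_of_measure hγ0 hγ1 hc hc1 hc0] with ω hω
    rcases hω with h | h <;> simp [Set.indicator, h]
  rw [integral_congr_ae hae,
    integral_add (integrable_const _) ((integrable_const _).indicator h1),
    integral_indicator_const _ h1]
  simp only [measureReal_def, hc1, ENNReal.toReal_ofReal hγ0, integral_const, measure_univ,
    ENNReal.toReal_one, smul_eq_mul]
  ring

/-- Jensen's inequality for the exponential. -/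
lemma exp_integral_le_integral_exp {Ω : Type*} [MeasurableSpace Ω] {μ : Measure Ω}
    [IsProbabilityMeasure μ] {X : Ω → ℝ} (hX : Integrable X μ)
    (hexp : Integrable (fun ω => exp (X ω)) μ) :
    exp (∫ ω, X ω ∂μ) ≤ ∫ ω, exp (X ω) ∂μ :=
  convexOn_exp.map_integral_le continuous_exp.continuousOn isClosed_univ
    (Filter.Eventually.of_forall fun _ => Set.mem_univ _) hX hexp

/-- The Bernoulli relative entropy dominates the Legendre transform of the Bernoulli
log-moment generating function. -/
lemma mul_sub_log_le_bernoulli_klDiv {γ p : ℝ} (hγ0 : 0 < γ) (hγ1 : γ < 1) (hp0 : 0 < p)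
    (hp1 : p < 1) (θ : ℝ) :
    θ * p - log (γ * exp θ + (1 - γ)) ≤
      p * log (p / γ) + (1 - p) * log ((1 - p) / (1 - γ)) := by
  have hq : 0 < 1 - p := by linarith
  have hδ : 0 < 1 - γ := by linarith
  have hconc := strictConcaveOn_log_Ioi.concaveOn.2
    (show γ * exp θ / p ∈ Set.Ioi (0 : ℝ) from div_pos (mul_pos hγ0 (exp_pos θ)) hp0)
    (show (1 - γ) / (1 - p) ∈ Set.Ioi (0 : ℝ) from div_pos hδ hq)
    hp0.le hq.le (by ring)
  simp only [smul_eq_mul] at hconc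
  rw [mul_div_cancel₀ _ hp0.ne', mul_div_cancel₀ _ hq.ne',
    log_div (by positivity) hp0.ne', log_mul hγ0.ne' (exp_pos θ).ne', log_exp,
    log_div hδ.ne' hq.ne'] at hconc
  rw [log_div hp0.ne' hγ0.ne', log_div hq.ne' hδ.ne']
  linarith

/-- Among i.i.d. injection processes with mean `λ`, the decay rate
`Φ₁ = sup_θ { −log E[e^{θ(c − a)}] }` of the decoding interval, where `c` is Bernoulli(`γ`)
independent of the injection `a`, is at most the Bernoulli KL divergence
`λ log(λ/γ) + (1 − λ) log((1 − λ)/(1 − γ))`, which is achieved by the constant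
injection `a ≡ λ`. -/
theorem statement2 {Ω : Type*} [MeasureSpace Ω] [IsProbabilityMeasure (ℙ : Measure Ω)]
    (γ lam : ℝ) (hγ1 : γ < 1) (hlam : 0 < lam) (hlt : lam < γ)
    (c a : Ω → ℝ) (hc : Measurable c) (ha : Measurable a)
    (hc1 : ℙ {ω | c ω = 1} = ENNReal.ofReal γ)
    (hc0 : ℙ {ω | c ω = 0} = ENNReal.ofReal (1 - γ))
    (hindep : IndepFun a c)
    (hmean : ∫ ω, a ω = lam)
    (hmgf : ∀ θ : ℝ, Integrable (fun ω => Real.exp (-θ * a ω))) :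
    (⨆ θ : ℝ, -Real.log (∫ ω, Real.exp (θ * (c ω - a ω)))) ≤
      lam * Real.log (lam / γ) + (1 - lam) * Real.log ((1 - lam) / (1 - γ)) := by
  have hγ0 : 0 < γ := hlam.trans hlt
  have ha_int : Integrable a := by
    by_contra h
    exact hlam.ne' (hmean ▸ integral_undef h)
  refine ciSup_le fun θ => le_trans ?_
    (mul_sub_log_le_bernoulli_klDiv hγ0 hγ1 hlam (hlt.trans hγ1) θ)
  have hfactor : ∫ ω, exp (θ * (c ω - a ω)) =
      (∫ ω, exp (-θ * a ω)) * (γ * exp θ + (1 - γ)) := by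
    have hprod := (hindep.comp (φ := fun x => exp (-θ * x)) (ψ := fun x => exp (θ * x))
      (by fun_prop) (by fun_prop)).integral_fun_mul_eq_mul_integral
      (by fun_prop) (by fun_prop)
    simp only [Function.comp_apply, ← exp_add] at hprod
    rw [← integral_exp_mul_of_bernoulli hγ0.le hγ1.le hc hc1 hc0 θ, ← hprod]
    refine integral_congr_ae (Filter.Eventually.of_forall fun ω => ?_)
    ring_nf
  have hjensen := exp_integral_le_integral_exp (ha_int.const_mul (-θ)) (hmgf θ)
  rw [integral_const_mul, hmean] at hjensen
  have hpos : 0 < ∫ ω, exp (-θ * a ω) := (exp_pos _).trans_le hjensen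
  have hmgf_pos : 0 < γ * exp θ + (1 - γ) := by
    have := mul_pos hγ0 (exp_pos θ)
    linarith
  rw [hfactor, log_mul hpos.ne' hmgf_pos.ne']
  have := (le_log_iff_exp_le hpos).2 hjensen
  linarith
end

section
/- Let Φ > 0 and C > 0 be real numbers, and let p, d : ℕ → ℝ be sequences with 0 ≤ p(k) ≤ 1 for all k, −lim_{b→∞} (1/b) log p(b) = Φ, and C·p(k) ≤ d(k) ≤ C·( k·p(k) + Σ_{b=k}^{∞} p(b) ) for all k (the series converging). Then −lim_{k→∞} (1/k) log d(k) = Φ. -/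
open Real Filter

/-- A sequence `K * k * exp (-(a * k))` decays at exponential rate `a`. -/
lemma tendsto_rate_const_mul_id_mul_exp {K : ℝ} (hK : 0 < K) (a : ℝ) :
    Tendsto (fun k : ℕ => -(1 / (k : ℝ)) * Real.log (K * k * Real.exp (-(a * k))))
      atTop (nhds a) := by
  have hlog : Tendsto (fun k : ℕ => Real.log k / (k : ℝ)) atTop (nhds 0) := by
    simpa [Function.comp_def] using (Real.tendsto_pow_log_div_mul_add_atTop 1 0 1 one_ne_zero).comp
      tendsto_natCast_atTop_atTop
  have hconst : Tendsto (fun k : ℕ => Real.log K / (k : ℝ)) atTop (nhds 0) :=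
    tendsto_const_div_atTop_nhds_zero_nat _
  have h := (hconst.add hlog).const_sub a
  rw [add_zero, sub_zero] at h
  refine h.congr' ?_
  filter_upwards [eventually_gt_atTop 0] with k hk
  have hk' : (0 : ℝ) < k := Nat.cast_pos.2 hk
  rw [Real.log_mul (by positivity) (by positivity), Real.log_mul hK.ne' hk'.ne', Real.log_exp]
  field_simp
  ring

/-- A sequence with positive exponential decay rate is eventually nonzero. -/
lemma eventually_ne_zero_of_tendsto_rate {Φ : ℝ} (hΦ : 0 < Φ) {p : ℕ → ℝ}
    (hrate : Tendsto (fun b : ℕ => -(1 / (b : ℝ)) * Real.log (p b)) atTop (nhds Φ)) :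
    ∀ᶠ k in atTop, p k ≠ 0 := by
  filter_upwards [hrate.eventually_const_lt hΦ] with k hk h0
  simp [h0] at hk

/-- A geometric bound on the terms from index `k` on gives a geometric bound on the tail sum. -/
lemma tsum_tail_le_of_le_exp {a : ℝ} (ha : 0 < a) {p : ℕ → ℝ} (hsum : Summable p) {k : ℕ}
    (h : ∀ b, k ≤ b → p b ≤ Real.exp (-(a * b))) :
    ∑' b : ℕ, p (k + b) ≤ Real.exp (-(a * k)) * (1 - Real.exp (-a))⁻¹ := by
  have hgeom : HasSum (fun b : ℕ => Real.exp (-(a * k)) * Real.exp (-a) ^ b)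
      (Real.exp (-(a * k)) * (1 - Real.exp (-a))⁻¹) :=
    (hasSum_geometric_of_lt_one (Real.exp_pos _).le
      (Real.exp_lt_one_iff.2 (neg_lt_zero.2 ha))).mul_left _
  have hshift : Summable fun b => p (k + b) := hsum.comp_injective (add_right_injective k)
  refine hasSum_le (fun b => ?_) hshift.hasSum hgeom
  refine (h _ (Nat.le_add_right k b)).trans_eq ?_
  rw [← Real.exp_nat_mul, ← Real.exp_add]
  congr 1
  push_cast
  ring

/-- Transfer lemma for decay rates: if `p` has exponential decay rate `Φ` and
`C·p(k) ≤ d(k) ≤ C·(k·p(k) + Σ_{b=k}^∞ p(b))`, then `d` has decay rate `Φ` too. -/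
theorem statement10 (Φ C : ℝ) (hΦ : 0 < Φ) (hC : 0 < C) (p d : ℕ → ℝ)
    (hp0 : ∀ k, 0 ≤ p k) (hp1 : ∀ k, p k ≤ 1)
    (hsum : Summable p)
    (hrate : Tendsto (fun b : ℕ => -(1 / (b : ℝ)) * Real.log (p b)) atTop (nhds Φ))
    (hlow : ∀ k : ℕ, C * p k ≤ d k)
    (hup : ∀ k : ℕ, d k ≤ C * ((k : ℝ) * p k + ∑' b : ℕ, p (k + b))) :
    Tendsto (fun k : ℕ => -(1 / (k : ℝ)) * Real.log (d k)) atTop (nhds Φ) := by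
  have hpos : ∀ᶠ k in atTop, 0 < p k :=
    (eventually_ne_zero_of_tendsto_rate hΦ hrate).mono fun k hk => (hp0 k).lt_of_ne' hk
  have rate_anti : ∀ (k : ℕ) {x y : ℝ}, 0 < x → x ≤ y →
      -(1 / (k : ℝ)) * Real.log y ≤ -(1 / (k : ℝ)) * Real.log x := fun k x y hx hxy =>
    mul_le_mul_of_nonpos_left (Real.log_le_log hx hxy) (neg_nonpos.2 (by positivity))
  refine tendsto_order.2 ⟨fun a' ha' => ?_, fun a' ha' => ?_⟩
  · obtain ⟨a, ha, haΦ⟩ := exists_between (max_lt ha' hΦ)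
    obtain ⟨ha'a, ha0⟩ := max_lt_iff.1 ha
    have hexp : ∀ᶠ b : ℕ in atTop, p b ≤ Real.exp (-(a * b)) := by
      filter_upwards [hrate.eventually_const_lt haΦ, hpos, eventually_gt_atTop 0] with b hb hpb hb0
      have hb0' : (0 : ℝ) < b := Nat.cast_pos.2 hb0
      rw [← Real.log_le_iff_le_exp hpb]
      have := mul_lt_mul_of_pos_right hb hb0'
      field_simp at this
      linarith
    have hM : 0 < (1 - Real.exp (-a))⁻¹ :=
      inv_pos.2 (sub_pos.2 (Real.exp_lt_one_iff.2 (neg_lt_zero.2 ha0)))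
    set M := (1 - Real.exp (-a))⁻¹ with hMdef
    have hlim := tendsto_rate_const_mul_id_mul_exp (K := C * (1 + M)) (by positivity) a
    filter_upwards [hlim.eventually_const_lt ha'a, hpos, eventually_forall_ge_atTop.2 hexp,
      eventually_ge_atTop 1] with k hk hpk hek hk1
    refine hk.trans_le (rate_anti k ((mul_pos hC hpk).trans_le (hlow k)) ((hup k).trans ?_))
    have hk1' : (1 : ℝ) ≤ k := Nat.one_le_cast.2 hk1
    have htail := tsum_tail_le_of_le_exp ha0 hsum hek
    rw [← hMdef] at htail
    calc C * ((k : ℝ) * p k + ∑' b : ℕ, p (k + b))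
        ≤ C * (k * Real.exp (-(a * k)) + Real.exp (-(a * k)) * (k * M)) := by
          gcongr
          · exact hek k le_rfl
          · refine htail.trans ?_
            gcongr
            exact le_mul_of_one_le_left hM.le hk1'
      _ = C * (1 + M) * k * Real.exp (-(a * k)) := by ring
  · have hlim : Tendsto (fun k : ℕ => -(1 / (k : ℝ)) * Real.log (C * p k)) atTop (nhds Φ) := by
      have h := (tendsto_const_div_atTop_nhds_zero_nat (-Real.log C)).add hrate
      rw [zero_add] at h
      refine h.congr' ?_
      filter_upwards [hpos] with k hk
      rw [Real.log_mul hC.ne' hk.ne']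
      ring
    filter_upwards [hlim.eventually_lt_const ha', hpos] with k hk hpk
    exact (rate_anti k (mul_pos hC hpk) (hlow k)).trans_lt hk
end

section
/- For all real numbers λ, γ with 0 < λ < γ < 1, the equation e^{λθ}(γe^{−θ} + 1 − γ) = 1 has exactly one solution θ = η with η > 0. -/
open Real

/-- The function `θ ↦ e^{cθ}` is strictly convex for `c ≠ 0`. -/
lemma strictConvexOn_exp_const_mul {c : ℝ} (hc : c ≠ 0) :
    StrictConvexOn ℝ Set.univ fun θ : ℝ => Real.exp (c * θ) := by
  refine ⟨convex_univ, fun x _ y _ hxy a b ha hb hab => ?_⟩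
  have h := strictConvexOn_exp.2 (Set.mem_univ (c * x)) (Set.mem_univ (c * y))
    (fun h => hxy (mul_left_cancel₀ hc h)) ha hb hab
  simp only [smul_eq_mul] at h ⊢
  rwa [show c * (a * x + b * y) = a * (c * x) + b * (c * y) by ring]

/-- The moment generating function of `lam - c`, with `c` Bernoulli of parameter `γ`,
is strictly convex. -/
lemma strictConvexOn_bernoulli_increment_mgf {lam γ : ℝ} (hlam : 0 < lam) (hlt : lam < γ)
    (hγ : γ < 1) :
    StrictConvexOn ℝ Set.univ
      fun θ : ℝ => Real.exp (lam * θ) * (γ * Real.exp (-θ) + 1 - γ) := by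
  refine ⟨convex_univ, fun x _ y _ hxy a b ha hb hab => ?_⟩
  have hγ0 : 0 < γ := hlam.trans hlt
  have h₁ := (strictConvexOn_exp_const_mul (c := lam - 1) (by linarith)).2
    (Set.mem_univ x) (Set.mem_univ y) hxy ha hb hab
  have h₂ := (strictConvexOn_exp_const_mul hlam.ne').2
    (Set.mem_univ x) (Set.mem_univ y) hxy ha hb hab
  have expand (θ : ℝ) : Real.exp (lam * θ) * (γ * Real.exp (-θ) + 1 - γ)
      = γ * Real.exp ((lam - 1) * θ) + (1 - γ) * Real.exp (lam * θ) := by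
    rw [show (lam - 1) * θ = lam * θ + -θ by ring, Real.exp_add]
    ring
  simp only [expand, smul_eq_mul] at h₁ h₂ ⊢
  linarith [mul_lt_mul_of_pos_left h₁ hγ0, mul_lt_mul_of_pos_left h₂ (sub_pos.2 hγ)]

/-- A strictly convex function takes the value `f x` at most once to the right of `x`. -/
lemma StrictConvexOn.eq_of_lt_of_eq {f : ℝ → ℝ} (hf : StrictConvexOn ℝ Set.univ f) {x a b : ℝ}
    (ha : x < a) (hb : x < b) (hfa : f a = f x) (hfb : f b = f x) : a = b := by
  have key {u v : ℝ} (hu : x < u) (huv : u < v) (hfu : f u = f x) (hfv : f v = f x) : False := by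
    have h := hf.slope_strict_mono_adjacent (Set.mem_univ x) (Set.mem_univ v) hu huv
    simp [hfu, hfv] at h
  rcases lt_trichotomy a b with h | h | h
  · exact (key ha h hfa hfb).elim
  · exact h
  · exact (key hb h hfb hfa).elim

/-- For `0 < λ < γ < 1`, the Lundberg equation `e^{λθ}(γe^{−θ} + 1 − γ) = 1` has exactly
one positive solution `θ = η`. -/
theorem statement11 (lam γ : ℝ) (hlam : 0 < lam) (hlt : lam < γ) (hγ : γ < 1) :
    ∃! θ : ℝ, 0 < θ ∧ Real.exp (lam * θ) * (γ * Real.exp (-θ) + 1 - γ) = 1 := by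
  have hconv := strictConvexOn_bernoulli_increment_mgf hlam hlt hγ
  set f : ℝ → ℝ := fun θ => Real.exp (lam * θ) * (γ * Real.exp (-θ) + 1 - γ) with hf
  have hf0 : f 0 = 1 := by simp [hf]
  have hcont : Continuous f := by fun_prop
  have hderiv : HasDerivAt f (lam - γ) 0 := by
    have h₁ : HasDerivAt (fun θ : ℝ => Real.exp (lam * θ)) lam 0 := by
      simpa using ((hasDerivAt_id (0 : ℝ)).const_mul lam).exp
    have h₂ : HasDerivAt (fun θ : ℝ => γ * Real.exp (-θ) + 1 - γ) (-γ) 0 := by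
      simpa using ((((hasDerivAt_id (0 : ℝ)).neg.exp).const_mul γ).add_const 1).sub_const γ
    refine (h₁.mul h₂).congr_deriv ?_
    simp only [mul_zero, neg_zero, Real.exp_zero]
    ring
  -- At `T` the term `(1 - γ) e^{λT}` alone already equals `1`.
  set T : ℝ := -Real.log (1 - γ) / lam with hT
  have hT0 : 0 < T :=
    div_pos (neg_pos.2 (Real.log_neg (by linarith) (by linarith))) hlam
  have hfT : 1 ≤ f T := by
    have h : Real.exp (lam * T) * (1 - γ) = 1 := by
      rw [hT, mul_div_cancel₀ _ hlam.ne', Real.exp_neg, Real.exp_log (by linarith)]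
      exact inv_mul_cancel₀ (by linarith)
    have hpos : 0 < Real.exp (lam * T) * (γ * Real.exp (-T)) := by
      have : 0 < γ := hlam.trans hlt
      positivity
    simp only [hf]
    linarith
  obtain ⟨t, ht, ht0, htT⟩ : ∃ t, f t < 1 ∧ 0 < t ∧ t < T := by
    have hslope := hderiv.tendsto_slope_zero_right.eventually_lt_const (sub_neg.2 hlt)
    obtain ⟨t, h, ht⟩ := (hslope.and (Ioo_mem_nhdsGT hT0)).exists
    refine ⟨t, ?_, ht⟩
    rw [zero_add, hf0, smul_eq_mul] at h
    linarith [(pos_iff_neg_of_mul_neg h).1 (inv_pos.2 ht.1)]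
  obtain ⟨η, hη, hfη⟩ := intermediate_value_Icc htT.le hcont.continuousOn ⟨ht.le, hfT⟩
  have hη0 : 0 < η := ht0.trans_le hη.1
  exact ⟨η, ⟨hη0, hfη⟩, fun θ hθ =>
    hconv.eq_of_lt_of_eq hθ.1 hη0 (hθ.2.trans hf0.symm) (hfη.trans hf0.symm)⟩
end
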